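/- Let N be a positive integer, 0 < s < t < 1, and m > 0. Every minimizer F for φ(m) is essentially bounded: there exists R > 0 such that |F ∖ B(0,R)| = 0. -/

import Mathlib

open MeasureTheory ENNReal

/-- Interaction energy `∫_A ∫_B |x-y|^{-(N+α)} dy dx` in `[0,∞]`. -/
noncomputable def interEnergy (N : ℕ) (α : ℝ)
    (A B : Set (EuclideanSpace ℝ (Fin N))) : ℝ≥0∞ :=
  ∫⁻ x in A, ∫⁻ y in B, ENNReal.ofReal (‖x - y‖ ^ (-((N : ℝ) + α))) ∂volume ∂volume

/-- The fractional `α`-perimeter `P_α(E) = ∫_E ∫_{Eᶜ} |x-y|^{-(N+α)} dy dx`. -/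
noncomputable def fracPer (N : ℕ) (α : ℝ) (E : Set (EuclideanSpace ℝ (Fin N))) : ℝ≥0∞ :=
  interEnergy N α E Eᶜ

/-- The free energy `F_{s,t}(E) = (1-t) P_t(E) - s P_s(E)`. -/
noncomputable def freeEnergy (N : ℕ) (s t : ℝ) (E : Set (EuclideanSpace ℝ (Fin N))) : ℝ :=
  (1 - t) * (fracPer N t E).toReal - s * (fracPer N s E).toReal

/-- `F` is a minimizer of the free energy `F_{s,t}` among measurable sets of volume `m`
with finite `t`-perimeter. -/
def IsMinimizer (N : ℕ) (s t m : ℝ) (F : Set (EuclideanSpace ℝ (Fin N))) : Prop :=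
  MeasurableSet F ∧ volume F = ENNReal.ofReal m ∧ fracPer N t F < ⊤ ∧
    ∀ E : Set (EuclideanSpace ℝ (Fin N)), MeasurableSet E →
      volume E = ENNReal.ofReal m → fracPer N t E < ⊤ →
      freeEnergy N s t F ≤ freeEnergy N s t E

/-!
Let `F` be a minimizer, `D = F \ B(0, r)` its part outside a large ball, and write `E_α(A, B)` for
the interaction energy. Comparing `F` with the dilation of `F \ D` to volume `m`, and absorbing the
`s`-energy through `E_s ≤ ε E_t + K |·|`, gives `E_t(D, Fᶜ) ≤ C (E_t(D, F \ D) + |D|)`.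
Since `P_t(D) = E_t(D, Fᶜ) + E_t(D, F \ D)`, the fractional isoperimetric inequality then yields
`|D|^{1 - t/N} ≤ C E_t(D, F ∩ B(0, r))` as soon as `|D|` is small. Averaging over
`r ∈ (R, R + h]`, the volume `f(r) = |F \ B(0, r)|` satisfies
`f(R + h)^{1 - t/N} ≤ C h^{-t} f(R)`, and a De Giorgi iteration along `R + 2 - 2^{1-k}` forces `f`
to vanish at a finite radius.
-/

open Set Filter Topology Metric Module
open scoped Pointwise

section RadialIntegrals

variable {α h : ℝ}

lemma min_mul_rpow_neg_eqOn_Ioc (α h : ℝ) :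
    EqOn (fun r : ℝ => min h r * r ^ (-(1 + α))) (fun r => r ^ (-α)) (Ioc 0 h) := by
  intro r hr
  simp only [min_eq_right hr.2]
  rw [mul_comm, ← Real.rpow_add_one hr.1.ne']
  ring_nf

lemma min_mul_rpow_neg_eqOn_Ioi (α h : ℝ) :
    EqOn (fun r : ℝ => min h r * r ^ (-(1 + α))) (fun r => h * r ^ (-(1 + α))) (Ioi h) := by
  intro r hr
  simp only [min_eq_left (mem_Ioi.1 hr).le]

lemma integrableOn_Ioc_min_mul_rpow_neg (hα : α < 1) (hh : 0 < h) :
    IntegrableOn (fun r : ℝ => min h r * r ^ (-(1 + α))) (Ioc 0 h) := by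
  rw [integrableOn_congr_fun (min_mul_rpow_neg_eqOn_Ioc α h) measurableSet_Ioc,
    ← intervalIntegrable_iff_integrableOn_Ioc_of_le hh.le]
  exact intervalIntegral.intervalIntegrable_rpow' (by linarith)

lemma integrableOn_Ioi_min_mul_rpow_neg (hα : 0 < α) (hh : 0 < h) :
    IntegrableOn (fun r : ℝ => min h r * r ^ (-(1 + α))) (Ioi h) := by
  rw [integrableOn_congr_fun (min_mul_rpow_neg_eqOn_Ioi α h) measurableSet_Ioi]
  exact (integrableOn_Ioi_rpow_of_lt (by linarith) hh).const_mul h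

lemma integrableOn_min_mul_rpow_neg (hα₀ : 0 < α) (hα₁ : α < 1) (hh : 0 < h) :
    IntegrableOn (fun r : ℝ => min h r * r ^ (-(1 + α))) (Ioi 0) := by
  rw [← Ioc_union_Ioi_eq_Ioi hh.le]
  exact (integrableOn_Ioc_min_mul_rpow_neg hα₁ hh).union
    (integrableOn_Ioi_min_mul_rpow_neg hα₀ hh)

lemma integral_min_mul_rpow_neg (hα₀ : 0 < α) (hα₁ : α < 1) (hh : 0 < h) :
    ∫ r in Ioi (0 : ℝ), min h r * r ^ (-(1 + α)) = h ^ (1 - α) / (α * (1 - α)) := by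
  have near : ∫ r in Ioc 0 h, min h r * r ^ (-(1 + α)) = h ^ (1 - α) / (1 - α) := by
    rw [setIntegral_congr_fun measurableSet_Ioc (min_mul_rpow_neg_eqOn_Ioc α h),
      ← intervalIntegral.integral_of_le hh.le, integral_rpow (Or.inl (by linarith)),
      neg_add_eq_sub, Real.zero_rpow (by linarith), sub_zero]
  have far : ∫ r in Ioi h, min h r * r ^ (-(1 + α)) = h ^ (1 - α) / α := by
    rw [setIntegral_congr_fun measurableSet_Ioi (min_mul_rpow_neg_eqOn_Ioi α h),
      integral_const_mul, integral_Ioi_rpow_of_lt (by linarith) hh,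
      show -(1 + α) + 1 = -α by ring, neg_div_neg_eq, ← mul_div_assoc, sub_eq_add_neg,
      Real.rpow_add hh, Real.rpow_one]
  have h1α : 1 - α ≠ 0 := by linarith
  rw [← Ioc_union_Ioi_eq_Ioi hh.le, setIntegral_union Ioc_disjoint_Ioi_same measurableSet_Ioi
    (integrableOn_Ioc_min_mul_rpow_neg hα₁ hh) (integrableOn_Ioi_min_mul_rpow_neg hα₀ hh),
    near, far]
  field_simp
  ring

lemma pow_pred_smul_min_mul_rpow_neg_eqOn {d : ℕ} (hd : 0 < d) (α h : ℝ) :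
    EqOn (fun r : ℝ => r ^ (d - 1) • (min h r * r ^ (-((d : ℝ) + α))))
      (fun r => min h r * r ^ (-(1 + α))) (Ioi 0) := by
  intro r hr
  have exponents : ((d - 1 : ℕ) : ℝ) + -((d : ℝ) + α) = -(1 + α) := by
    rw [Nat.cast_pred hd]
    ring
  dsimp only
  rw [smul_eq_mul, mul_left_comm, ← Real.rpow_natCast, ← Real.rpow_add hr, exponents]

lemma rpow_neg_le_mul_add_min_mul {a b δ r : ℝ} (ha : 0 < a) (hab : a ≤ b) (hδ : 0 < δ)
    (hr : 0 ≤ r) :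
    r ^ (-a) ≤ δ ^ (b - a) * r ^ (-b) + δ⁻¹ * (min δ r * r ^ (-a)) := by
  rcases hr.eq_or_lt with rfl | hr
  · rw [Real.zero_rpow (neg_ne_zero.2 ha.ne')]
    positivity
  rcases le_total r δ with hrδ | hδr
  · have : r ^ (-a) ≤ δ ^ (b - a) * r ^ (-b) := by
      calc r ^ (-a) = r ^ (b - a) * r ^ (-b) := by rw [← Real.rpow_add hr]; ring_nf
        _ ≤ δ ^ (b - a) * r ^ (-b) := by gcongr
    exact this.trans (le_add_of_nonneg_right (by positivity))
  · rw [min_eq_left hδr, inv_mul_cancel_left₀ hδ.ne']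
    exact le_add_of_nonneg_left (by positivity)

variable {E : Type*} [NormedAddCommGroup E] [NormedSpace ℝ E] [FiniteDimensional ℝ E]
  [MeasurableSpace E] [BorelSpace E] (μ : Measure E) [μ.IsAddHaarMeasure]

lemma lintegral_min_mul_norm_sub_rpow_neg [Nontrivial E] (hα₀ : 0 < α) (hα₁ : α < 1)
    (hh : 0 < h) (x : E) :
    ∫⁻ y, ENNReal.ofReal (min h ‖x - y‖ * ‖x - y‖ ^ (-((finrank ℝ E : ℝ) + α))) ∂μ =
      ENNReal.ofReal (finrank ℝ E * μ.real (ball 0 1) / (α * (1 - α)) * h ^ (1 - α)) := by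
  rw [lintegral_sub_left_eq_self
    (fun z => ENNReal.ofReal (min h ‖z‖ * ‖z‖ ^ (-((finrank ℝ E : ℝ) + α)))) x,
    ← ofReal_integral_eq_lintegral_ofReal, integral_fun_norm_addHaar μ
      (fun r => min h r * r ^ (-((finrank ℝ E : ℝ) + α))),
    setIntegral_congr_fun measurableSet_Ioi
      (pow_pred_smul_min_mul_rpow_neg_eqOn finrank_pos α h),
    integral_min_mul_rpow_neg hα₀ hα₁ hh, nsmul_eq_mul, smul_eq_mul]
  · ring_nf
  · rw [integrable_fun_norm_addHaar μ (f := fun r => min h r * r ^ (-((finrank ℝ E : ℝ) + α))),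
      integrableOn_congr_fun (pow_pred_smul_min_mul_rpow_neg_eqOn finrank_pos α h)
        measurableSet_Ioi]
    exact integrableOn_min_mul_rpow_neg hα₀ hα₁ hh
  · exact Eventually.of_forall fun z => by positivity

lemma setLIntegral_smul_set {l : ℝ} (hl : 0 < l) (A : Set E) (f : E → ℝ≥0∞) :
    ∫⁻ x in l • A, f x ∂μ = ENNReal.ofReal (l ^ finrank ℝ E) * ∫⁻ x in A, f (l • x) ∂μ := by
  have embedding : MeasurableEmbedding (l • · : E → E) :=
    (Homeomorph.smulOfNeZero l hl.ne').measurableEmbedding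
  have pullback : ∫⁻ x in A, f (l • x) ∂μ = ∫⁻ x in l • A, f x ∂(μ.map (l • ·)) := by
    rw [embedding.restrict_map, embedding.lintegral_map, ← image_smul,
      preimage_image_eq _ embedding.injective]
  rw [pullback, Measure.map_addHaar_smul μ hl.ne', Measure.restrict_smul, lintegral_smul_measure,
    smul_eq_mul, ← mul_assoc, ← ENNReal.ofReal_mul (by positivity), abs_of_pos (by positivity),
    mul_inv_cancel₀ (by positivity), ENNReal.ofReal_one, one_mul]

end RadialIntegrals

lemma ofReal_rpow_neg_mul_measure_ball_inter_le {E : Type*} [NormedAddCommGroup E]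
    [MeasurableSpace E] [OpensMeasurableSpace E] (μ : Measure E) [NullSingletonClass μ] {a : ℝ}
    (ha : 0 ≤ a) {S : Set E} (hS : MeasurableSet S) (x : E) (ρ : ℝ) :
    ENNReal.ofReal (ρ ^ (-a)) * μ (ball x ρ ∩ S) ≤
      ∫⁻ y in S, ENNReal.ofReal (‖x - y‖ ^ (-a)) ∂μ := by
  calc ENNReal.ofReal (ρ ^ (-a)) * μ (ball x ρ ∩ S)
      = ∫⁻ _ in (ball x ρ ∩ S) \ {x}, ENNReal.ofReal (ρ ^ (-a)) ∂μ := by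
        rw [setLIntegral_const, measure_sdiff_null (measure_singleton x)]
    _ ≤ ∫⁻ y in (ball x ρ ∩ S) \ {x}, ENNReal.ofReal (‖x - y‖ ^ (-a)) ∂μ := by
        refine setLIntegral_mono' ((measurableSet_ball.inter hS).diff (measurableSet_singleton x))
          fun y hy => ENNReal.ofReal_le_ofReal ?_
        have norm_pos : 0 < ‖x - y‖ := norm_sub_pos_iff.2 (Ne.symm hy.2)
        have norm_lt : ‖x - y‖ < ρ := by simpa [dist_eq_norm, norm_sub_rev] using hy.1.1
        exact Real.rpow_le_rpow_of_nonpos norm_pos norm_lt.le (neg_nonpos.2 ha)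
    _ ≤ ∫⁻ y in S, ENNReal.ofReal (‖x - y‖ ^ (-a)) ∂μ := lintegral_mono_set fun y hy => hy.1.2

lemma tendsto_measureReal_sdiff_ball_atTop {X : Type*} [PseudoMetricSpace X] [MeasurableSpace X]
    [OpensMeasurableSpace X] {μ : Measure X} {F : Set X} (hF : MeasurableSet F) (hμF : μ F ≠ ⊤)
    (x : X) :
    Tendsto (fun r => μ.real (F \ ball x r)) atTop (𝓝 0) := by
  have empty : ⋂ r : ℝ, F \ ball x r = ∅ :=
    eq_empty_of_forall_notMem fun y hy =>
      (mem_iInter.1 hy (dist y x + 1)).2 (mem_ball.2 (lt_add_one _))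
  have tendsto_measure := tendsto_measure_iInter_atTop (μ := μ) (s := fun r : ℝ => F \ ball x r)
    (fun r => (hF.diff measurableSet_ball).nullMeasurableSet)
    (fun _ _ hr => sdiff_subset_sdiff_right (ball_subset_ball hr))
    ⟨0, measure_ne_top_of_subset sdiff_subset hμF⟩
  rw [empty, measure_empty] at tendsto_measure
  exact (ENNReal.tendsto_toReal ENNReal.zero_ne_top).comp tendsto_measure

section InterEnergy

variable {N : ℕ} {α s t : ℝ} {A B C D F X Y : Set (EuclideanSpace ℝ (Fin N))}

lemma interEnergy_comm (N : ℕ) (α : ℝ) (A B : Set (EuclideanSpace ℝ (Fin N))) :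
    interEnergy N α A B = interEnergy N α B A := by
  unfold interEnergy
  rw [lintegral_lintegral_swap (Measurable.aemeasurable (by fun_prop))]
  simp_rw [norm_sub_rev]

lemma interEnergy_union_left (hB : MeasurableSet B) (hAB : Disjoint A B) :
    interEnergy N α (A ∪ B) C = interEnergy N α A C + interEnergy N α B C :=
  lintegral_union hB hAB

lemma interEnergy_union_right (hC : MeasurableSet C) (hBC : Disjoint B C) :
    interEnergy N α A (B ∪ C) = interEnergy N α A B + interEnergy N α A C := by
  simp only [interEnergy_comm N α A, interEnergy_union_left hC hBC]

lemma fracPer_eq_add_of_subset (hD : MeasurableSet D) (hDF : D ⊆ F) :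
    fracPer N α F = interEnergy N α (F \ D) Fᶜ + interEnergy N α D Fᶜ := by
  rw [← interEnergy_union_left hD disjoint_sdiff_left, sdiff_union_of_subset hDF, fracPer]

lemma fracPer_sdiff (hD : MeasurableSet D) (hDF : D ⊆ F) :
    fracPer N α (F \ D) = interEnergy N α (F \ D) Fᶜ + interEnergy N α (F \ D) D := by
  rw [← interEnergy_union_right hD (disjoint_compl_left_iff_subset.2 hDF), fracPer, Set.sdiff_eq,
    compl_inter, compl_compl]

lemma fracPer_eq_add_interEnergy_sdiff (hF : MeasurableSet F) (hD : MeasurableSet D) (hDF : D ⊆ F) :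
    fracPer N α D = interEnergy N α D Fᶜ + interEnergy N α D (F \ D) := by
  simpa only [sdiff_sdiff_cancel_left hDF] using
    fracPer_sdiff (α := α) (hF.diff hD) (sdiff_subset : F \ D ⊆ F)

lemma interEnergy_smul_set (α : ℝ) {l : ℝ} (hl : 0 < l) (A B : Set (EuclideanSpace ℝ (Fin N))) :
    interEnergy N α (l • A) (l • B) =
      ENNReal.ofReal (l ^ ((N : ℝ) - α)) * interEnergy N α A B := by
  have kernel_smul (x y : EuclideanSpace ℝ (Fin N)) :
      ENNReal.ofReal (‖l • x - l • y‖ ^ (-((N : ℝ) + α))) =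
        ENNReal.ofReal (l ^ (-((N : ℝ) + α))) * ENNReal.ofReal (‖x - y‖ ^ (-((N : ℝ) + α))) := by
    rw [← smul_sub, norm_smul, Real.norm_of_nonneg hl.le,
      Real.mul_rpow hl.le (norm_nonneg _), ENNReal.ofReal_mul (by positivity)]
  have exponents : l ^ N * (l ^ N * l ^ (-((N : ℝ) + α))) = l ^ ((N : ℝ) - α) := by
    rw [← Real.rpow_natCast, ← Real.rpow_add hl, ← Real.rpow_add hl]
    ring_nf
  simp_rw [interEnergy, setLIntegral_smul_set volume hl, kernel_smul,
    lintegral_const_mul' _ _ ENNReal.ofReal_ne_top, finrank_euclideanSpace_fin]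
  rw [← mul_assoc, ← mul_assoc, mul_assoc (ENNReal.ofReal (l ^ N)),
    ← ENNReal.ofReal_mul (by positivity), ← ENNReal.ofReal_mul (by positivity), exponents]

lemma fracPer_smul_set (α : ℝ) {l : ℝ} (hl : 0 < l) (A : Set (EuclideanSpace ℝ (Fin N))) :
    fracPer N α (l • A) = ENNReal.ofReal (l ^ ((N : ℝ) - α)) * fracPer N α A := by
  have smul_compl : l • Aᶜ = (l • A)ᶜ := smul_set_compl (a := Units.mk0 l hl.ne')
  rw [fracPer, ← smul_compl, interEnergy_smul_set α hl, fracPer]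

/-- The constant `C` in `∫ min(h, |z|) |z|^{-(N+α)} dz = C h^{1-α}` over `ℝ^N`, for `0 < α < 1`
and `h > 0`. -/
noncomputable def truncKernelConst (N : ℕ) (α : ℝ) : ℝ :=
  N * volume.real (ball (0 : EuclideanSpace ℝ (Fin N)) 1) / (α * (1 - α))

lemma truncKernelConst_pos [NeZero N] (hα₀ : 0 < α) (hα₁ : α < 1) : 0 < truncKernelConst N α :=
  have hN : (0 : ℝ) < N := Nat.cast_pos.2 (NeZero.pos N)
  have ball_pos : 0 < volume.real (ball (0 : EuclideanSpace ℝ (Fin N)) 1) :=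
    ENNReal.toReal_pos (measure_ball_pos _ _ one_pos).ne' measure_ball_lt_top.ne
  div_pos (mul_pos hN ball_pos) (mul_pos hα₀ (sub_pos.2 hα₁))

lemma lintegral_min_mul_kernel [NeZero N] (hα₀ : 0 < α) (hα₁ : α < 1) {h : ℝ} (hh : 0 < h)
    (x : EuclideanSpace ℝ (Fin N)) :
    ∫⁻ y, ENNReal.ofReal (min h ‖x - y‖ * ‖x - y‖ ^ (-((N : ℝ) + α))) =
      ENNReal.ofReal (truncKernelConst N α * h ^ (1 - α)) := by
  simpa only [finrank_euclideanSpace_fin, truncKernelConst] using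
    lintegral_min_mul_norm_sub_rpow_neg volume hα₀ hα₁ hh x

lemma interEnergy_le_rpow_mul_add [NeZero N] (hs₀ : 0 < s) (hs₁ : s < 1) (hst : s ≤ t)
    {δ : ℝ} (hδ : 0 < δ) (X Y : Set (EuclideanSpace ℝ (Fin N))) :
    interEnergy N s X Y ≤ ENNReal.ofReal (δ ^ (t - s)) * interEnergy N t X Y +
      ENNReal.ofReal (δ⁻¹ * (truncKernelConst N s * δ ^ (1 - s))) * volume X := by
  have kernel_le (x y : EuclideanSpace ℝ (Fin N)) :
      ENNReal.ofReal (‖x - y‖ ^ (-((N : ℝ) + s))) ≤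
        ENNReal.ofReal (δ ^ (t - s)) * ENNReal.ofReal (‖x - y‖ ^ (-((N : ℝ) + t))) +
          ENNReal.ofReal δ⁻¹ *
            ENNReal.ofReal (min δ ‖x - y‖ * ‖x - y‖ ^ (-((N : ℝ) + s))) := by
    rw [← ENNReal.ofReal_mul (by positivity), ← ENNReal.ofReal_mul (by positivity),
      ← ENNReal.ofReal_add (by positivity) (by positivity), ← add_sub_add_left_eq_sub t s (N : ℝ)]
    exact ENNReal.ofReal_le_ofReal
      (rpow_neg_le_mul_add_min_mul (by positivity) (by gcongr) hδ (norm_nonneg _))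
  rw [interEnergy, interEnergy, ← lintegral_const_mul' _ _ ENNReal.ofReal_ne_top,
    ← setLIntegral_const, ← lintegral_add_right _ measurable_const]
  refine lintegral_mono fun x => (lintegral_mono (kernel_le x)).trans ?_
  rw [lintegral_add_left (by fun_prop), lintegral_const_mul' _ _ ENNReal.ofReal_ne_top,
    lintegral_const_mul' _ _ ENNReal.ofReal_ne_top, ENNReal.ofReal_mul (by positivity),
    ← lintegral_min_mul_kernel hs₀ hs₁ hδ x]
  gcongr
  exact Measure.restrict_le_self

lemma exists_interEnergy_le_mul_add [NeZero N] (hs₀ : 0 < s) (hs₁ : s < 1) (hst : s < t)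
    {ε : ℝ} (hε : 0 < ε) :
    ∃ K : ℝ, 0 ≤ K ∧ ∀ X Y : Set (EuclideanSpace ℝ (Fin N)),
      interEnergy N s X Y ≤
        ENNReal.ofReal ε * interEnergy N t X Y + ENNReal.ofReal K * volume X := by
  have hδ : 0 < ε ^ (t - s)⁻¹ := by positivity
  have hδε : (ε ^ (t - s)⁻¹) ^ (t - s) = ε := Real.rpow_inv_rpow hε.le (sub_pos.2 hst).ne'
  have hκ := truncKernelConst_pos (N := N) hs₀ hs₁
  refine ⟨_, ?_, fun X Y => hδε ▸ interEnergy_le_rpow_mul_add hs₀ hs₁ hst.le hδ X Y⟩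
  positivity

lemma exists_toReal_interEnergy_le_mul_add [NeZero N] (hs₀ : 0 < s) (hs₁ : s < 1) (hst : s < t)
    {ε : ℝ} (hε : 0 < ε) :
    ∃ K : ℝ, 0 ≤ K ∧ ∀ X Y : Set (EuclideanSpace ℝ (Fin N)),
      volume X ≠ ⊤ → interEnergy N t X Y ≠ ⊤ →
        (interEnergy N s X Y).toReal ≤ ε * (interEnergy N t X Y).toReal + K * volume.real X := by
  obtain ⟨K, hK, le_add⟩ := exists_interEnergy_le_mul_add (N := N) hs₀ hs₁ hst hε
  refine ⟨K, hK, fun X Y hX hXY => ENNReal.toReal_le_of_le_ofReal (by positivity) ?_⟩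
  rw [ENNReal.ofReal_add (by positivity) (by positivity), ENNReal.ofReal_mul hε.le,
    ENNReal.ofReal_mul hK, ENNReal.ofReal_toReal hXY, ofReal_measureReal hX]
  exact le_add X Y

lemma interEnergy_ne_top_of_lt [NeZero N] (hs₀ : 0 < s) (hs₁ : s < 1) (hst : s < t)
    (hX : volume X ≠ ⊤) (hXY : interEnergy N t X Y ≠ ⊤) : interEnergy N s X Y ≠ ⊤ := by
  obtain ⟨K, -, le_add⟩ := exists_interEnergy_le_mul_add (N := N) hs₀ hs₁ hst one_pos
  refine ne_top_of_le_ne_top ?_ (le_add X Y)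
  finiteness

lemma ofReal_rpow_mul_sq_volume_le_fracPer [NeZero N] {ρ : ℝ} (ht : 0 ≤ t) (hD : MeasurableSet D)
    (hDtop : volume D ≠ ⊤)
    (hDρ : 2 * volume D ≤ volume (ball (0 : EuclideanSpace ℝ (Fin N)) ρ)) :
    ENNReal.ofReal (ρ ^ (-((N : ℝ) + t))) * volume D ^ 2 ≤ fracPer N t D := by
  have volume_le (x : EuclideanSpace ℝ (Fin N)) : volume D ≤ volume (ball x ρ ∩ Dᶜ) := by
    calc volume D = 2 * volume D - volume D := by rw [two_mul, ENNReal.add_sub_cancel_right hDtop]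
      _ ≤ volume (ball x ρ) - volume D := by
        rw [Measure.addHaar_ball_center volume x]
        gcongr
      _ ≤ volume (ball x ρ ∩ Dᶜ) := le_measure_sdiff
  calc ENNReal.ofReal (ρ ^ (-((N : ℝ) + t))) * volume D ^ 2
      = ∫⁻ _ in D, ENNReal.ofReal (ρ ^ (-((N : ℝ) + t))) * volume D := by
        rw [setLIntegral_const, sq, mul_assoc]
    _ ≤ fracPer N t D := lintegral_mono fun x =>
        (mul_le_mul_right (volume_le x) _).trans
          (ofReal_rpow_neg_mul_measure_ball_inter_le volume (by positivity) hD.compl x ρ)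

lemma exists_mul_rpow_volume_le_fracPer (ht₀ : 0 ≤ t) (htN : t < N) :
    ∃ c : ℝ, 0 < c ∧ ∀ D : Set (EuclideanSpace ℝ (Fin N)), MeasurableSet D → volume D ≠ ⊤ →
      ENNReal.ofReal (c * volume.real D ^ (1 - t / N)) ≤ fracPer N t D := by
  have hN : (0 : ℝ) < N := ht₀.trans_lt htN
  have : NeZero N := ⟨by exact_mod_cast hN.ne'⟩
  set w := volume.real (ball (0 : EuclideanSpace ℝ (Fin N)) 1) with hw
  have hw₀ : 0 < w := ENNReal.toReal_pos (measure_ball_pos _ _ one_pos).ne' measure_ball_lt_top.ne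
  refine ⟨(2 / w) ^ (-1 - t / N), by positivity, fun D hD hDtop => ?_⟩
  set u := volume.real D with hu
  have hu₀ : 0 ≤ u := measureReal_nonneg
  rcases hu₀.eq_or_lt with hu₀ | hu₀
  · have : 1 - t / N ≠ 0 := (sub_pos.2 ((div_lt_one hN).2 htN)).ne'
    simp [← hu₀, Real.zero_rpow this]
  set ρ := (2 / w * u) ^ (N : ℝ)⁻¹ with hρ
  have hρN : ρ ^ N = 2 / w * u := Real.rpow_inv_natCast_pow (by positivity) (NeZero.ne N)
  have volume_ball : 2 * volume D = volume (ball (0 : EuclideanSpace ℝ (Fin N)) ρ) := by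
    rw [Measure.addHaar_ball_of_pos _ _ (by positivity), finrank_euclideanSpace_fin, hρN,
      ← ofReal_measureReal hDtop, ← hu, ← ofReal_measureReal measure_ball_lt_top.ne, ← hw,
      ← ENNReal.ofReal_mul (by positivity), ← ENNReal.ofReal_ofNat,
      ← ENNReal.ofReal_mul (by positivity)]
    field_simp
  have powers : (2 / w) ^ (-1 - t / N) * u ^ (1 - t / N) = ρ ^ (-((N : ℝ) + t)) * u ^ 2 := by
    rw [hρ, ← Real.rpow_mul (by positivity), Real.mul_rpow (by positivity) hu₀.le,
      ← Real.rpow_natCast u, mul_assoc, ← Real.rpow_add hu₀]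
    congr 2 <;> field_simp <;> push_cast <;> ring
  rw [powers, ENNReal.ofReal_mul (by positivity), ENNReal.ofReal_pow hu₀.le,
    ofReal_measureReal hDtop]
  exact ofReal_rpow_mul_sq_volume_le_fracPer ht₀ hD hDtop volume_ball.le

lemma lintegral_Ioc_indicator_Ioc_le (R h a b : ℝ) (c : ℝ≥0∞) :
    ∫⁻ r in Ioc R (R + h), (Ioc a b).indicator (fun _ => c) r ≤
      c * ENNReal.ofReal (min h (b - a)) := by
  rw [lintegral_indicator_const measurableSet_Ioc, Measure.restrict_apply measurableSet_Ioc,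
    ENNReal.ofReal_min]
  gcongr
  refine le_min ((measure_mono inter_subset_right).trans_eq ?_)
    ((measure_mono inter_subset_left).trans_eq Real.volume_Ioc)
  rw [Real.volume_Ioc, add_sub_cancel_left]

lemma interEnergy_sdiff_ball_le_lintegral_indicator (hX : MeasurableSet X) {R r : ℝ} (hRr : R ≤ r) :
    interEnergy N α (X \ ball 0 r) (Y ∩ ball 0 r) ≤
      ∫⁻ x in X \ ball 0 R, ∫⁻ y, (Ioc ‖y‖ ‖x‖).indicator
        (fun _ => ENNReal.ofReal (‖x - y‖ ^ (-((N : ℝ) + α)))) r := by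
  refine (setLIntegral_mono' (hX.diff measurableSet_ball) fun x hx => ?_).trans
    (lintegral_mono_set (sdiff_subset_sdiff_right (ball_subset_ball hRr)))
  refine (lintegral_mono_set inter_subset_right).trans ?_
  rw [← lintegral_indicator measurableSet_ball]
  refine lintegral_mono (indicator_le fun y hy => ?_)
  have hr : r ∈ Ioc ‖y‖ ‖x‖ :=
    ⟨mem_ball_zero_iff.1 hy, not_lt.1 fun hxr => hx.2 (mem_ball_zero_iff.2 hxr)⟩
  rw [indicator_of_mem hr]

lemma measurable_indicator_Ioc_norm_kernel (N : ℕ) (α : ℝ) :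
    Measurable fun p : (ℝ × EuclideanSpace ℝ (Fin N)) × EuclideanSpace ℝ (Fin N) =>
      (Ioc ‖p.2‖ ‖p.1.2‖).indicator
        (fun _ => ENNReal.ofReal (‖p.1.2 - p.2‖ ^ (-((N : ℝ) + α)))) p.1.1 := by
  have measurableSet_crossing : MeasurableSet
      {p : (ℝ × EuclideanSpace ℝ (Fin N)) × EuclideanSpace ℝ (Fin N) |
        ‖p.2‖ < p.1.1 ∧ p.1.1 ≤ ‖p.1.2‖} :=
    (measurableSet_lt (f := fun p : (ℝ × EuclideanSpace ℝ (Fin N)) × _ => ‖p.2‖)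
      (g := fun p => p.1.1) (by fun_prop) (by fun_prop)).inter
      (measurableSet_le (f := fun p : (ℝ × EuclideanSpace ℝ (Fin N)) × _ => p.1.1)
        (g := fun p => ‖p.1.2‖) (by fun_prop) (by fun_prop))
  exact Measurable.indicator (f := fun p : (ℝ × EuclideanSpace ℝ (Fin N)) × _ =>
    ENNReal.ofReal (‖p.1.2 - p.2‖ ^ (-((N : ℝ) + α)))) (by fun_prop) measurableSet_crossing

/-- Integrating over `r` first, a pair `(x, y)` is counted only while `‖y‖ < r ≤ ‖x‖`, on a set of
length at most `min h ‖x - y‖`; this factor makes the kernel integrable. -/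
lemma lintegral_interEnergy_sdiff_ball_le [NeZero N] (ht₀ : 0 < t) (ht₁ : t < 1)
    (hX : MeasurableSet X) (Y : Set (EuclideanSpace ℝ (Fin N))) (R : ℝ) {h : ℝ} (hh : 0 < h) :
    ∫⁻ r in Ioc R (R + h), interEnergy N t (X \ ball 0 r) (Y ∩ ball 0 r) ≤
      ENNReal.ofReal (truncKernelConst N t * h ^ (1 - t)) * volume (X \ ball 0 R) := by
  let crossing (r : ℝ) (x y : EuclideanSpace ℝ (Fin N)) : ℝ≥0∞ :=
    (Ioc ‖y‖ ‖x‖).indicator (fun _ => ENNReal.ofReal (‖x - y‖ ^ (-((N : ℝ) + t)))) r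
  have measurable_crossing : Measurable fun p : (ℝ × EuclideanSpace ℝ (Fin N)) ×
      EuclideanSpace ℝ (Fin N) => crossing p.1.1 p.1.2 p.2 :=
    measurable_indicator_Ioc_norm_kernel N t
  calc ∫⁻ r in Ioc R (R + h), interEnergy N t (X \ ball 0 r) (Y ∩ ball 0 r)
      ≤ ∫⁻ r in Ioc R (R + h), ∫⁻ x in X \ ball 0 R, ∫⁻ y, crossing r x y :=
        setLIntegral_mono' measurableSet_Ioc fun r hr =>
          interEnergy_sdiff_ball_le_lintegral_indicator hX hr.1.le
    _ = ∫⁻ x in X \ ball 0 R, ∫⁻ r in Ioc R (R + h), ∫⁻ y, crossing r x y :=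
        lintegral_lintegral_swap measurable_crossing.lintegral_prod_right.aemeasurable
    _ = ∫⁻ x in X \ ball 0 R, ∫⁻ y, ∫⁻ r in Ioc R (R + h), crossing r x y :=
        lintegral_congr fun x => lintegral_lintegral_swap
          (measurable_crossing.comp (f := fun p : ℝ × EuclideanSpace ℝ (Fin N) => ((p.1, x), p.2))
            (by fun_prop)).aemeasurable
    _ ≤ ∫⁻ _ in X \ ball 0 R, ENNReal.ofReal (truncKernelConst N t * h ^ (1 - t)) := by
        refine lintegral_mono fun x => ?_
        rw [← lintegral_min_mul_kernel ht₀ ht₁ hh x]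
        refine lintegral_mono fun y => (lintegral_Ioc_indicator_Ioc_le _ _ _ _ _).trans ?_
        rw [mul_comm, ← ENNReal.ofReal_mul' (by positivity)]
        gcongr
        exact norm_sub_norm_le x y
    _ = ENNReal.ofReal (truncKernelConst N t * h ^ (1 - t)) * volume (X \ ball 0 R) :=
        setLIntegral_const _ _

lemma le_mul_of_forall_ofReal_le_interEnergy_sdiff_ball [NeZero N] (ht₀ : 0 < t) (ht₁ : t < 1)
    (hX : MeasurableSet X) (hX_top : volume X ≠ ⊤) {R h p C : ℝ} (hh : 0 < h) (hp : 0 ≤ p)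
    (hC : 0 ≤ C)
    (le_interEnergy : ∀ r ∈ Ioc R (R + h), ENNReal.ofReal p ≤
      ENNReal.ofReal C * interEnergy N t (X \ ball 0 r) (Y ∩ ball 0 r)) :
    p ≤ C * truncKernelConst N t * h ^ (-t) * volume.real (X \ ball 0 R) := by
  have hκ := truncKernelConst_pos (N := N) ht₀ ht₁
  have integrated : ENNReal.ofReal (p * h) ≤ ENNReal.ofReal
      (C * (truncKernelConst N t * h ^ (1 - t) * volume.real (X \ ball 0 R))) := by
    calc ENNReal.ofReal (p * h) = ∫⁻ _ in Ioc R (R + h), ENNReal.ofReal p := by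
          rw [setLIntegral_const, Real.volume_Ioc, add_sub_cancel_left, ENNReal.ofReal_mul hp]
      _ ≤ ∫⁻ r in Ioc R (R + h),
            ENNReal.ofReal C * interEnergy N t (X \ ball 0 r) (Y ∩ ball 0 r) :=
          setLIntegral_mono' measurableSet_Ioc le_interEnergy
      _ ≤ ENNReal.ofReal C * (ENNReal.ofReal (truncKernelConst N t * h ^ (1 - t)) *
            volume (X \ ball 0 R)) := by
          rw [lintegral_const_mul' _ _ ENNReal.ofReal_ne_top]
          gcongr
          exact lintegral_interEnergy_sdiff_ball_le ht₀ ht₁ hX Y R hh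
      _ = ENNReal.ofReal
            (C * (truncKernelConst N t * h ^ (1 - t) * volume.real (X \ ball 0 R))) := by
          rw [← ofReal_measureReal (measure_ne_top_of_subset sdiff_subset hX_top),
            ← ENNReal.ofReal_mul (by positivity), ← ENNReal.ofReal_mul hC]
  rw [ENNReal.ofReal_le_ofReal_iff (by positivity)] at integrated
  refine le_of_mul_le_mul_right (integrated.trans_eq ?_) hh
  rw [sub_eq_neg_add, Real.rpow_add hh, Real.rpow_one]
  ring

end InterEnergy

section Iteration

variable {C γ t : ℝ}

lemma mul_rpow_neg_mul_geometric_eq {ε q : ℝ} (hC : 0 < C) (hε : 0 < ε) (hq : 0 < q)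
    (hqγ : q ^ (1 - γ) = 2 ^ (-t)) (hεγ : ε ^ (1 - γ) = q ^ γ / C) (k : ℕ) :
    C * ((1 / 2 : ℝ) ^ k) ^ (-t) * (ε * q ^ k) = (ε * q ^ (k + 1)) ^ γ := by
  have split_ε : ε = ε ^ γ * ε ^ (1 - γ) := by rw [← Real.rpow_add hε]; simp
  have split_q : q ^ k = (q ^ γ) ^ k * (q ^ (1 - γ)) ^ k := by
    rw [← mul_pow, ← Real.rpow_add hq]; simp
  have half_pow : ((1 / 2 : ℝ) ^ k) ^ (-t) * (2 ^ (-t)) ^ k = 1 := by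
    rw [← Real.rpow_pow_comm (by norm_num), ← mul_pow,
      ← Real.mul_rpow (by norm_num) (by norm_num)]
    simp
  calc C * ((1 / 2 : ℝ) ^ k) ^ (-t) * (ε * q ^ k)
      = C * ((1 / 2 : ℝ) ^ k) ^ (-t) *
          (ε ^ γ * (q ^ γ / C) * ((q ^ γ) ^ k * (2 ^ (-t)) ^ k)) := by
        rw [← hεγ, ← hqγ, ← split_ε, ← split_q]
    _ = ((1 / 2 : ℝ) ^ k) ^ (-t) * (2 ^ (-t)) ^ k * (ε ^ γ * (q ^ γ) ^ (k + 1)) := by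
        field_simp
        ring
    _ = (ε * q ^ (k + 1)) ^ γ := by
        rw [half_pow, one_mul, Real.mul_rpow hε.le (by positivity), Real.rpow_pow_comm hq.le]

lemma le_geometric_of_rpow_le {f : ℝ → ℝ} {ε q R : ℝ} (hf₀ : ∀ r, 0 ≤ f r) (hγ : 0 < γ)
    (hC : 0 < C) (hε : 0 < ε) (hq : 0 < q) (hqγ : q ^ (1 - γ) = 2 ^ (-t))
    (hεγ : ε ^ (1 - γ) = q ^ γ / C) (hfR : f R ≤ ε)
    (hf : ∀ r h, R ≤ r → 0 < h → f (r + h) ^ γ ≤ C * h ^ (-t) * f r) (k : ℕ) :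
    f (R + 2 - 2 * (1 / 2) ^ k) ≤ ε * q ^ k := by
  induction k with
  | zero => simpa using hfR
  | succ k ih =>
    have half_pow_le : ((1 : ℝ) / 2) ^ k ≤ 1 := pow_le_one₀ (by norm_num) (by norm_num)
    have radius_succ : R + 2 - 2 * (1 / 2 : ℝ) ^ (k + 1) =
        R + 2 - 2 * (1 / 2) ^ k + (1 / 2) ^ k := by ring
    rw [← Real.rpow_le_rpow_iff (hf₀ _) (by positivity) hγ,
      ← mul_rpow_neg_mul_geometric_eq hC hε hq hqγ hεγ k, radius_succ]
    refine (hf _ _ (by linarith) (by positivity)).trans ?_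
    gcongr

lemma exists_pos_eq_zero_of_rpow_le {f : ℝ → ℝ} {R₀ : ℝ} (hf₀ : ∀ r, 0 ≤ f r)
    (hanti : Antitone f) (hlim : Tendsto f atTop (𝓝 0)) (hγ₀ : 0 < γ) (hγ₁ : γ < 1) (ht : 0 < t)
    (hC : 0 < C) (hf : ∀ R h, R₀ ≤ R → 0 < h → f (R + h) ^ γ ≤ C * h ^ (-t) * f R) :
    ∃ R, 0 < R ∧ f R = 0 := by
  have h1γ : 0 < 1 - γ := sub_pos.2 hγ₁
  set q : ℝ := (2 ^ (-t)) ^ (1 - γ)⁻¹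
  have hq₀ : 0 < q := by positivity
  have hq₁ : q < 1 := Real.rpow_lt_one (by positivity)
    (Real.rpow_lt_one_of_one_lt_of_neg one_lt_two (neg_lt_zero.2 ht)) (inv_pos.2 h1γ)
  have hqγ : q ^ (1 - γ) = 2 ^ (-t) := Real.rpow_inv_rpow (by positivity) h1γ.ne'
  set ε : ℝ := (q ^ γ / C) ^ (1 - γ)⁻¹
  have hε : 0 < ε := by positivity
  have hεγ : ε ^ (1 - γ) = q ^ γ / C := Real.rpow_inv_rpow (by positivity) h1γ.ne'
  obtain ⟨R, hfR, hR⟩ :=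
    ((hlim.eventually_le_const hε).and (eventually_ge_atTop (max R₀ 0))).exists
  have decay (k : ℕ) : f (R + 2) ≤ ε * q ^ k :=
    (hanti (sub_le_self _ (by positivity))).trans <|
      le_geometric_of_rpow_le hf₀ hγ₀ hC hε hq₀ hqγ hεγ hfR
        (fun r h hr => hf r h ((le_max_left _ _).trans (hR.trans hr))) k
  have geometric_tendsto : Tendsto (fun k : ℕ => ε * q ^ k) atTop (𝓝 0) := by
    simpa using (tendsto_pow_atTop_nhds_zero_of_lt_one hq₀.le hq₁).const_mul ε
  exact ⟨R + 2, by linarith [(le_max_right _ _).trans hR],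
    (ge_of_tendsto' geometric_tendsto decay).antisymm (hf₀ _)⟩

end Iteration

lemma div_sub_le_one_add_two_mul_div {m v : ℝ} (hm : 0 < m) (hv₀ : 0 ≤ v) (hv : v ≤ m / 2) :
    m / (m - v) ≤ 1 + 2 * v / m := by
  have hmv : 0 < m - v := by linarith
  have expand : (1 + 2 * v / m) * (m - v) = m + v * (m - 2 * v) / m := by
    field_simp
    ring
  rw [div_le_iff₀ hmv, expand]
  exact le_add_of_nonneg_right (div_nonneg (mul_nonneg hv₀ (by linarith)) hm.le)

lemma exists_pos_forall_mul_le_mul_rpow {c C γ : ℝ} (hc : 0 < c) (hC : 0 < C) (hγ : γ < 1) :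
    ∃ η : ℝ, 0 < η ∧ ∀ v, 0 ≤ v → v ≤ η → C * v ≤ c * v ^ γ := by
  have h1γ : 0 < 1 - γ := sub_pos.2 hγ
  refine ⟨(c / C) ^ (1 - γ)⁻¹, by positivity, fun v hv₀ hv => ?_⟩
  rcases hv₀.eq_or_lt with rfl | hv₀
  · simpa using mul_nonneg hc.le (Real.rpow_nonneg le_rfl γ)
  have rpow_le : v ^ (1 - γ) ≤ c / C := by
    rw [← Real.rpow_inv_rpow (div_pos hc hC).le h1γ.ne']
    gcongr
  calc C * v = C * (v ^ (1 - γ) * v ^ γ) := by rw [← Real.rpow_add hv₀]; simp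
    _ ≤ C * (c / C * v ^ γ) := by gcongr
    _ = c * v ^ γ := by field_simp

lemma div_sub_mul_toReal_fracPer_sdiff_le {N : ℕ} {α m v : ℝ}
    {D F : Set (EuclideanSpace ℝ (Fin N))} (hm : 0 < m) (hv₀ : 0 ≤ v) (hv : v ≤ m / 2)
    (hD : MeasurableSet D) (hDF : D ⊆ F) (hPF : fracPer N α F ≠ ⊤)
    (hDFD : interEnergy N α D (F \ D) ≠ ⊤) :
    m / (m - v) * (fracPer N α (F \ D)).toReal ≤
      (interEnergy N α (F \ D) Fᶜ).toReal +
        (2 * (interEnergy N α D (F \ D)).toReal + 2 * v / m * (fracPer N α F).toReal) := by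
  rw [fracPer_eq_add_of_subset hD hDF] at hPF
  obtain ⟨hAF, hDF_top⟩ := ENNReal.add_ne_top.1 hPF
  rw [fracPer_sdiff hD hDF, interEnergy_comm N α _ D, fracPer_eq_add_of_subset hD hDF,
    ENNReal.toReal_add hAF hDFD, ENNReal.toReal_add hAF hDF_top]
  set a := (interEnergy N α (F \ D) Fᶜ).toReal
  set b := (interEnergy N α D Fᶜ).toReal
  set i := (interEnergy N α D (F \ D)).toReal
  have hb : 0 ≤ b := ENNReal.toReal_nonneg
  have weight_le_one : 2 * v / m ≤ 1 := (div_le_one hm).2 (by linarith)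
  calc m / (m - v) * (a + i) ≤ (1 + 2 * v / m) * (a + i) := by
        gcongr
        exact div_sub_le_one_add_two_mul_div hm hv₀ hv
    _ = a + (i + 2 * v / m * i + 2 * v / m * a) := by ring
    _ ≤ a + (i + 1 * i + 2 * v / m * (a + b)) := by
        gcongr
        exact le_add_of_nonneg_right hb
    _ = a + (2 * i + 2 * v / m * (a + b)) := by ring

namespace IsMinimizer

variable {N : ℕ} {s t m : ℝ} {A D F : Set (EuclideanSpace ℝ (Fin N))}

lemma volume_ne_top (hF : IsMinimizer N s t m F) : volume F ≠ ⊤ :=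
  hF.2.1 ▸ ENNReal.ofReal_ne_top

lemma volumeReal_sdiff (hF : IsMinimizer N s t m F) (hm : 0 ≤ m) (hD : MeasurableSet D)
    (hDF : D ⊆ F) : volume.real (F \ D) = m - volume.real D := by
  rw [measureReal_sdiff hDF hD hF.volume_ne_top, Measure.real, hF.2.1, ENNReal.toReal_ofReal hm]

variable [NeZero N]

/-- The competitor is the dilation of `A` to volume `m`. -/
lemma freeEnergy_le_of_volume_le (hF : IsMinimizer N s t m F) (hs₀ : 0 ≤ s) (hs₁ : s ≤ 1)
    (ht₀ : 0 ≤ t) (ht₁ : t ≤ 1) (hA : MeasurableSet A) (hA₀ : 0 < volume.real A)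
    (hAm : volume.real A ≤ m) (hPA : fracPer N t A < ⊤) :
    freeEnergy N s t F ≤
      (1 - t) * (m / volume.real A * (fracPer N t A).toReal) - s * (fracPer N s A).toReal := by
  have hA_top : volume A ≠ ⊤ := (ENNReal.toReal_pos_iff.1 hA₀).2.ne
  have hN : (1 : ℝ) ≤ N := Nat.one_le_cast.2 NeZero.one_le
  have one_le_ratio : 1 ≤ m / volume.real A := (one_le_div hA₀).2 hAm
  set l := (m / volume.real A) ^ (N : ℝ)⁻¹
  have hl₁ : 1 ≤ l := Real.one_le_rpow one_le_ratio (by positivity)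
  have hl₀ : 0 < l := one_pos.trans_le hl₁
  have hlN : l ^ N = m / volume.real A :=
    Real.rpow_inv_natCast_pow (one_pos.le.trans one_le_ratio) (NeZero.ne N)
  have volume_smul : volume (l • A) = ENNReal.ofReal m := by
    rw [Measure.addHaar_smul, finrank_euclideanSpace_fin, abs_of_pos (by positivity), hlN,
      ← ofReal_measureReal hA_top, ← ENNReal.ofReal_mul (by positivity),
      div_mul_cancel₀ _ hA₀.ne']
  have fracPer_lt_top : fracPer N t (l • A) < ⊤ := by
    rw [fracPer_smul_set t hl₀]
    exact ENNReal.mul_lt_top ENNReal.ofReal_lt_top hPA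
  have rpow_t_le : l ^ ((N : ℝ) - t) ≤ m / volume.real A := by
    rw [← hlN, ← Real.rpow_natCast]
    exact Real.rpow_le_rpow_of_exponent_le hl₁ (by linarith)
  have one_le_rpow_s : 1 ≤ l ^ ((N : ℝ) - s) := Real.one_le_rpow hl₁ (by linarith)
  refine (hF.2.2.2 _ (hA.const_smul₀ l) volume_smul fracPer_lt_top).trans ?_
  rw [freeEnergy, fracPer_smul_set t hl₀, fracPer_smul_set s hl₀,
    ENNReal.toReal_mul, ENNReal.toReal_mul, ENNReal.toReal_ofReal (by positivity),
    ENNReal.toReal_ofReal (by positivity)]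
  have : 0 ≤ 1 - t := sub_nonneg.2 ht₁
  gcongr
  exact le_mul_of_one_le_left ENNReal.toReal_nonneg one_le_rpow_s

lemma mul_toReal_interEnergy_compl_le (hF : IsMinimizer N s t m F) (hs : 0 < s) (hst : s < t)
    (ht : t < 1) (hm : 0 < m) (hD : MeasurableSet D) (hDF : D ⊆ F)
    (hDm : volume.real D ≤ m / 2) (hDFD : interEnergy N t D (F \ D) ≠ ⊤) :
    (1 - t) * (interEnergy N t D Fᶜ).toReal ≤
      s * (interEnergy N s D Fᶜ).toReal + (1 - t) * (2 * (interEnergy N t D (F \ D)).toReal +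
        2 * volume.real D / m * (fracPer N t F).toReal) := by
  have hD_top : volume D ≠ ⊤ := measure_ne_top_of_subset hDF hF.volume_ne_top
  have hA_top : volume (F \ D) ≠ ⊤ := measure_ne_top_of_subset sdiff_subset hF.volume_ne_top
  obtain ⟨hAt, hDt⟩ := ENNReal.add_ne_top.1 (fracPer_eq_add_of_subset hD hDF ▸ hF.2.2.1.ne)
  have hAs := interEnergy_ne_top_of_lt hs (hst.trans ht) hst hA_top hAt
  have hDs := interEnergy_ne_top_of_lt hs (hst.trans ht) hst hD_top hDt
  have hPA : fracPer N t (F \ D) ≠ ⊤ := by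
    rw [fracPer_sdiff hD hDF, interEnergy_comm N t _ D]
    exact ENNReal.add_ne_top.2 ⟨hAt, hDFD⟩
  have hPA_s : (interEnergy N s (F \ D) Fᶜ).toReal ≤ (fracPer N s (F \ D)).toReal := by
    refine ENNReal.toReal_mono
      (interEnergy_ne_top_of_lt hs (hst.trans ht) hst hA_top hPA) ?_
    rw [fracPer_sdiff hD hDF]
    exact le_self_add
  have hD₀ : 0 ≤ volume.real D := measureReal_nonneg
  have volume_sdiff := hF.volumeReal_sdiff hm.le hD hDF
  have minimality := hF.freeEnergy_le_of_volume_le hs.le (hst.trans ht).le (hs.trans hst).le ht.le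
    (hF.1.diff hD) (by linarith) (by linarith) hPA.lt_top
  rw [freeEnergy, volume_sdiff, fracPer_eq_add_of_subset hD hDF, fracPer_eq_add_of_subset hD hDF,
    ENNReal.toReal_add hAt hDt, ENNReal.toReal_add hAs hDs] at minimality
  have dilation_le :=
    div_sub_mul_toReal_fracPer_sdiff_le hm hD₀ hDm hD hDF hF.2.2.1.ne hDFD
  linarith [mul_le_mul_of_nonneg_left dilation_le (sub_pos.2 ht).le,
    mul_le_mul_of_nonneg_left hPA_s hs.le]

lemma exists_interEnergy_compl_le (hF : IsMinimizer N s t m F) (hs : 0 < s) (hst : s < t)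
    (ht : t < 1) (hm : 0 < m) :
    ∃ C : ℝ, 0 < C ∧ ∀ D ⊆ F, MeasurableSet D → volume.real D ≤ m / 2 →
      interEnergy N t D Fᶜ ≤ ENNReal.ofReal C * (interEnergy N t D (F \ D) + volume D) := by
  have h1t : 0 < 1 - t := sub_pos.2 ht
  obtain ⟨K, hK, interpolation⟩ := exists_toReal_interEnergy_le_mul_add (N := N) hs
    (hst.trans ht) hst (ε := (1 - t) / (2 * s)) (by positivity)
  set P := (fracPer N t F).toReal
  set C := 2 * s * K / (1 - t) + 4 * P / m + 4
  have hC₀ : 0 < C := by positivity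
  refine ⟨C, hC₀, fun D hDF hD hDm => ?_⟩
  by_cases hDFD : interEnergy N t D (F \ D) = ⊤
  · simp [hDFD, hC₀]
  have hD_top : volume D ≠ ⊤ := measure_ne_top_of_subset hDF hF.volume_ne_top
  have hDt := (ENNReal.add_ne_top.1 (fracPer_eq_add_of_subset hD hDF ▸ hF.2.2.1.ne)).2
  have minimality := hF.mul_toReal_interEnergy_compl_le hs hst ht hm hD hDF hDm hDFD
  rw [← ENNReal.ofReal_toReal hDt, ← ENNReal.ofReal_toReal hDFD, ← ENNReal.ofReal_toReal hD_top,
    ← ENNReal.ofReal_add (by positivity) (by positivity), ← ENNReal.ofReal_mul (by positivity)]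
  refine ENNReal.ofReal_le_ofReal (le_of_mul_le_mul_left ?_ (half_pos h1t))
  set b := (interEnergy N t D Fᶜ).toReal
  set i := (interEnergy N t D (F \ D)).toReal
  set v := volume.real D
  have interpolation_mul : s * (interEnergy N s D Fᶜ).toReal ≤ (1 - t) / 2 * b + s * K * v := by
    calc s * (interEnergy N s D Fᶜ).toReal ≤ s * ((1 - t) / (2 * s) * b + K * v) := by
          gcongr
          exact interpolation D Fᶜ hD_top hDt
      _ = (1 - t) / 2 * b + s * K * v := by field_simp
  calc (1 - t) / 2 * b ≤ s * K * v + (1 - t) * (2 * i + 2 * v / m * P) := by linarith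
    _ = (1 - t) / 2 * (4 * i + (2 * s * K / (1 - t) + 4 * P / m) * v) := by
        field_simp
        ring
    _ ≤ (1 - t) / 2 * (C * i + C * v) := by
        gcongr
        · exact le_add_of_nonneg_left (by positivity)
        · exact le_add_of_nonneg_right zero_le_four
    _ = (1 - t) / 2 * (C * (i + v)) := by ring

lemma exists_rpow_volume_le_interEnergy (hF : IsMinimizer N s t m F) (hs : 0 < s) (hst : s < t)
    (ht : t < 1) (hm : 0 < m) :
    ∃ C η : ℝ, 0 < C ∧ 0 < η ∧ ∀ D ⊆ F, MeasurableSet D → volume.real D ≤ η →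
      ENNReal.ofReal (volume.real D ^ (1 - t / N)) ≤
        ENNReal.ofReal C * interEnergy N t D (F \ D) := by
  have ht₀ : 0 < t := hs.trans hst
  have hN : (1 : ℝ) ≤ N := Nat.one_le_cast.2 NeZero.one_le
  obtain ⟨c, hc, isoperimetric⟩ := exists_mul_rpow_volume_le_fracPer ht₀.le (ht.trans_le hN)
  obtain ⟨C, hC, compl_le⟩ := hF.exists_interEnergy_compl_le hs hst ht hm
  obtain ⟨η, hη, mul_le⟩ := exists_pos_forall_mul_le_mul_rpow (half_pos hc) hC
    (sub_lt_self 1 (show 0 < t / N by positivity))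
  refine ⟨(C + 1) / (c / 2), min (m / 2) η, by positivity, by positivity, fun D hDF hD hDη => ?_⟩
  have hD_top : volume D ≠ ⊤ := measure_ne_top_of_subset hDF hF.volume_ne_top
  set I := interEnergy N t D (F \ D)
  set p := volume.real D ^ (1 - t / N)
  have volume_le : ENNReal.ofReal C * volume D ≤ ENNReal.ofReal (c / 2 * p) := by
    rw [← ofReal_measureReal hD_top, ← ENNReal.ofReal_mul hC.le]
    exact ENNReal.ofReal_le_ofReal (mul_le _ measureReal_nonneg (hDη.trans (min_le_right _ _)))
  have absorbed : ENNReal.ofReal (c / 2 * p) ≤ ENNReal.ofReal (C + 1) * I := by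
    rw [← ENNReal.add_le_add_iff_right (a := ENNReal.ofReal (c / 2 * p)) ENNReal.ofReal_ne_top]
    calc ENNReal.ofReal (c / 2 * p) + ENNReal.ofReal (c / 2 * p)
        = ENNReal.ofReal (c * p) := by
          rw [← ENNReal.ofReal_add (by positivity) (by positivity)]
          ring_nf
      _ ≤ interEnergy N t D Fᶜ + I := by
          rw [← fracPer_eq_add_interEnergy_sdiff hF.1 hD hDF]
          exact isoperimetric D hD hD_top
      _ ≤ ENNReal.ofReal C * (I + volume D) + I := by
          gcongr
          exact compl_le D hDF hD (hDη.trans (min_le_left _ _))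
      _ = ENNReal.ofReal (C + 1) * I + ENNReal.ofReal C * volume D := by
          rw [ENNReal.ofReal_add hC.le one_pos.le, ENNReal.ofReal_one]
          ring
      _ ≤ ENNReal.ofReal (C + 1) * I + ENNReal.ofReal (c / 2 * p) := by gcongr
  calc ENNReal.ofReal p = ENNReal.ofReal (c / 2)⁻¹ * ENNReal.ofReal (c / 2 * p) := by
        rw [← ENNReal.ofReal_mul (by positivity), inv_mul_cancel_left₀ (by positivity)]
    _ ≤ ENNReal.ofReal (c / 2)⁻¹ * (ENNReal.ofReal (C + 1) * I) := by gcongr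
    _ = ENNReal.ofReal ((C + 1) / (c / 2)) * I := by
        rw [← mul_assoc, ← ENNReal.ofReal_mul (by positivity), inv_mul_eq_div]

lemma exists_rpow_volume_sdiff_ball_le (hF : IsMinimizer N s t m F) (hs : 0 < s) (hst : s < t)
    (ht : t < 1) (hm : 0 < m) :
    ∃ C R₀ : ℝ, 0 < C ∧ ∀ R h, R₀ ≤ R → 0 < h →
      volume.real (F \ ball 0 (R + h)) ^ (1 - t / N) ≤
        C * h ^ (-t) * volume.real (F \ ball 0 R) := by
  have ht₀ : 0 < t := hs.trans hst
  have hN : (1 : ℝ) ≤ N := Nat.one_le_cast.2 NeZero.one_le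
  obtain ⟨C, η, hC, hη, rpow_le⟩ := hF.exists_rpow_volume_le_interEnergy hs hst ht hm
  obtain ⟨R₀, hR₀⟩ := eventually_atTop.1 <|
    (tendsto_measureReal_sdiff_ball_atTop hF.1 hF.volume_ne_top 0).eventually_le_const hη
  have hκ := truncKernelConst_pos (N := N) ht₀ ht
  refine ⟨C * truncKernelConst N t, R₀, by positivity, fun R h hR hh => ?_⟩
  refine le_mul_of_forall_ofReal_le_interEnergy_sdiff_ball (Y := F) ht₀ ht hF.1 hF.volume_ne_top
    hh (by positivity) hC.le fun r hr => ?_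
  have volume_le : volume.real (F \ ball 0 (R + h)) ≤ volume.real (F \ ball 0 r) :=
    measureReal_mono (sdiff_subset_sdiff_right (ball_subset_ball hr.2))
      (measure_ne_top_of_subset sdiff_subset hF.volume_ne_top)
  rw [← sdiff_sdiff_right_self F]
  refine le_trans ?_ (rpow_le _ sdiff_subset (hF.1.diff measurableSet_ball)
    (hR₀ r (hR.trans hr.1.le)))
  gcongr
  exact sub_nonneg.2 (div_le_one_of_le₀ (ht.le.trans hN) (by positivity))

end IsMinimizer

/-- Every volume-constrained minimizer is essentially bounded. -/
theorem stmt11 (N : ℕ) (hN : 0 < N) (s t : ℝ) (hs : 0 < s) (hst : s < t) (ht : t < 1)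
    (m : ℝ) (hm : 0 < m) (F : Set (EuclideanSpace ℝ (Fin N)))
    (hF : IsMinimizer N s t m F) :
    ∃ R : ℝ, 0 < R ∧
      volume (F \ Metric.ball (0 : EuclideanSpace ℝ (Fin N)) R) = 0 := by
  have : NeZero N := ⟨hN.ne'⟩
  have htN : t < N := ht.trans_le (Nat.one_le_cast.2 hN)
  have ht₀ : 0 < t := hs.trans hst
  obtain ⟨C, R₀, hC, decay⟩ := hF.exists_rpow_volume_sdiff_ball_le hs hst ht hm
  have hF_top (r : ℝ) : volume (F \ ball 0 r) ≠ ⊤ :=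
    measure_ne_top_of_subset sdiff_subset hF.volume_ne_top
  obtain ⟨R, hR, volume_eq_zero⟩ := exists_pos_eq_zero_of_rpow_le
    (f := fun r => volume.real (F \ ball 0 r)) (fun _ => measureReal_nonneg)
    (fun _ r hr => measureReal_mono (sdiff_subset_sdiff_right (ball_subset_ball hr)) (hF_top _))
    (tendsto_measureReal_sdiff_ball_atTop hF.1 hF.volume_ne_top 0)
    (sub_pos.2 ((div_lt_one (ht₀.trans htN)).2 htN))
    (sub_lt_self 1 (show 0 < t / N by positivity)) ht₀ hC decay
  exact ⟨R, hR, (measureReal_eq_zero_iff (hF_top R)).1 volume_eq_zero⟩
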